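/- (Decidability of LFD) Fix the vocabulary with variables V = ℕ and an encodable set of predicate symbols with computable arity function. Then validity of LFD formulas on dependence models is decidable: there exists a computable function f from LFD formulas to Bool such that f(φ) = true iff φ is true at every admissible assignment of every dependence model. -/

import Mathlib

namespace LFD

/-- LFD formulas over variables `V` and a relational vocabulary `Pred` with arity map `ar`:
atoms `P x₁…x_n`, negation, conjunction, dependence modalities `𝔻_X φ`,
and dependence atoms `D_X y` (with `X ⊆ V` finite). -/
inductive Formula (V Pred : Type) (ar : Pred → ℕ) : Type where
  | atom (P : Pred) (x : Fin (ar P) → V)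
  | neg (φ : Formula V Pred ar)
  | conj (φ ψ : Formula V Pred ar)
  | dd (X : Finset V) (φ : Formula V Pred ar)
  | dep (X : Finset V) (y : V)

variable {V Pred O : Type} {ar : Pred → ℕ}

/-- The free variables of an LFD formula. -/
def Free [DecidableEq V] : Formula V Pred ar → Finset V
  | .atom _ x => Finset.univ.image x
  | .neg φ => Free φ
  | .conj φ ψ => Free φ ∪ Free ψ
  | .dd X _ => X
  | .dep X _ => X

/-- A dependence model: an interpretation `I` of each predicate symbol as a set of
tuples of objects, together with a set `A` of admissible assignments. -/
structure DepModel (V Pred : Type) (ar : Pred → ℕ) (O : Type) where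
  I : (P : Pred) → Set (Fin (ar P) → O)
  A : Set (V → O)

/-- `s =_X t` : the assignments `s` and `t` agree on all variables in `X`. -/
def agree (X : Set V) (s t : V → O) : Prop := ∀ x ∈ X, s x = t x

/-- Truth of an LFD formula at an assignment in a dependence model. -/
def Sat (M : DepModel V Pred ar O) : Formula V Pred ar → (V → O) → Prop
  | .atom P x, s => (fun i => s (x i)) ∈ M.I P
  | .neg φ, s => ¬ Sat M φ s
  | .conj φ ψ, s => Sat M φ s ∧ Sat M ψ s
  | .dd X φ, s => ∀ t ∈ M.A, agree (↑X) s t → Sat M φ t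
  | .dep X y, s => ∀ t ∈ M.A, agree (↑X) s t → s y = t y

end LFD

namespace LFD

/-- A Gödel numbering of LFD formulas over variables `V = ℕ` and an encodable set of
predicate symbols. -/
def enc {Pred : Type} [Encodable Pred] {ar : Pred → ℕ} : Formula ℕ Pred ar → ℕ
  | .atom P x => Nat.pair 0 (Nat.pair (Encodable.encode P) (Encodable.encode (List.ofFn x)))
  | .neg φ => Nat.pair 1 (enc φ)
  | .conj φ ψ => Nat.pair 2 (Nat.pair (enc φ) (enc ψ))
  | .dd X φ => Nat.pair 3 (Nat.pair (Encodable.encode X) (enc φ))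
  | .dep X y => Nat.pair 4 (Nat.pair (Encodable.encode X) y)

/-!
A dependence model yields a quasi-model: the set of types of its assignments, a type being the set
of formulas true at an assignment. Conversely, a quasi-model unravels into a dependence model whose
assignments are histories of moves between types. A move over `X` keeps the values of exactly the
variables determined by `X`, and the value of `y` is the part of the history up to the move that
last changed `y`. Two histories that agree on `X` have a common initial part after which neither
changes the value of a variable in `X`, so their types agree on everything local to `X`; hence each
history satisfies the formulas in its last type. Whether a set of types is a quasi-model refuting
`φ` depends only on codes below a computable bound, so refutability is a finite search.
-/

/-! ### Locality -/

section Locality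

variable {V Pred O : Type} {ar : Pred → ℕ} {M : DepModel V Pred ar O}

theorem agree.symm {X : Set V} {s t : V → O} (h : agree X s t) : agree X t s :=
  fun x hx => (h x hx).symm

theorem agree.trans {X : Set V} {s t u : V → O} (h : agree X s t) (h' : agree X t u) :
    agree X s u :=
  fun x hx => (h x hx).trans (h' x hx)

theorem agree.mono {X Y : Set V} {s t : V → O} (h : agree X s t) (hYX : Y ⊆ X) : agree Y s t :=
  fun x hx => h x (hYX hx)

theorem sat_congr_of_agree_free [DecidableEq V] {φ : Formula V Pred ar} {s t : V → O}
    (hs : s ∈ M.A) (ht : t ∈ M.A) (h : agree (Free φ) s t) : Sat M φ s ↔ Sat M φ t := by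
  induction φ with
  | atom P x =>
    have hx : (fun i => s (x i)) = fun i => t (x i) := funext fun i => h _ (by simp [Free])
    simp only [Sat, hx]
  | neg φ ih => exact not_congr (ih h)
  | conj φ ψ ihφ ihψ =>
    exact and_congr (ihφ (h.mono (by simp [Free]))) (ihψ (h.mono (by simp [Free])))
  | dd X φ =>
    exact forall₂_congr fun u _ => imp_congr_left ⟨h.symm.trans, h.trans⟩
  | dep X y =>
    constructor
    · exact fun hsy u hu htu => (hsy t ht h).symm.trans (hsy u hu (h.trans htu))
    · exact fun hty u hu hsu => (hty s hs h.symm).symm.trans (hty u hu (h.symm.trans hsu))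

end Locality

/-! ### Decoding -/

/-- The finite set of variables coded by `j`. The Gödel numbering codes both finite sets and
tuples of variables as lists, so the variables of an atom are read off in the same way. -/
def vars (j : ℕ) : Finset ℕ := (Denumerable.ofNat (List ℕ) j).toFinset

/-- The common shape `⟨tag, ⟨a, b⟩⟩` of the codes of formulas other than negations. -/
def code (tag a b : ℕ) : ℕ := Nat.pair tag (Nat.pair a b)

/-- The code of the atom with predicate code `p` and variable list code `j`. -/
abbrev atomCode (p j : ℕ) : ℕ := code 0 p j

/-- The code of the negation of the formula with code `a`. -/
abbrev negCode (a : ℕ) : ℕ := Nat.pair 1 a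

/-- The code of the conjunction of the formulas with codes `a` and `b`. -/
abbrev conjCode (a b : ℕ) : ℕ := code 2 a b

/-- The code of `𝔻_X φ`, where `k` codes `X` and `a` codes `φ`. -/
abbrev ddCode (k a : ℕ) : ℕ := code 3 k a

/-- The code of `D_X y`, where `k` codes `X`. -/
abbrev depCode (k y : ℕ) : ℕ := code 4 k y

theorem vars_encode_list (l : List ℕ) : vars (Encodable.encode l) = l.toFinset := by
  rw [vars, Denumerable.ofNat_encode]

theorem vars_encode_finset (X : Finset ℕ) : vars (Encodable.encode X) = X := by
  have hX : Encodable.encode X =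
      Encodable.encode (X.1.sort (Encodable.encode' ℕ ⁻¹'o (· ≤ ·))) := rfl
  ext y
  rw [hX, vars_encode_list, List.mem_toFinset, Multiset.mem_sort, Finset.mem_val]

theorem lt_encode_of_mem {y : ℕ} {l : List ℕ} (hy : y ∈ l) : y < Encodable.encode l := by
  induction l with
  | nil => simp at hy
  | cons a l ih =>
    have hpair := Nat.add_le_pair a (Encodable.encode l)
    rw [Encodable.encode_list_cons, Encodable.encode_nat]
    rcases List.mem_cons.1 hy with rfl | hy
    · omega
    · have := ih hy
      omega

theorem lt_of_mem_vars {y j : ℕ} (hy : y ∈ vars j) : y < j := by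
  simpa using lt_encode_of_mem (List.mem_toFinset.1 hy)

theorem lt_pair_right {c a : ℕ} (hc : 0 < c) : a < Nat.pair c a :=
  (Nat.lt_add_of_pos_left hc).trans_le (Nat.add_le_pair c a)

theorem left_le_code (c a b : ℕ) : a ≤ code c a b :=
  (Nat.left_le_pair _ _).trans (Nat.right_le_pair _ _)

theorem right_le_code (c a b : ℕ) : b ≤ code c a b :=
  (Nat.right_le_pair _ _).trans (Nat.right_le_pair _ _)

section Decode

variable {Pred : Type} {ar : Pred → ℕ}

/-- The atom with predicate `P` and variable list `l`, or a junk formula without free variables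
if `l` has the wrong length. -/
def atomOfList (P : Pred) (l : List ℕ) : Formula ℕ Pred ar :=
  if h : l.length = ar P then .atom P fun i => l.get (i.cast h.symm) else .dep ∅ 0

theorem atomOfList_ofFn (P : Pred) (x : Fin (ar P) → ℕ) :
    atomOfList P (List.ofFn x) = Formula.atom (ar := ar) P x := by
  simp [atomOfList, Fin.cast]

theorem free_atomOfList_subset (P : Pred) (l : List ℕ) :
    Free (atomOfList P l : Formula ℕ Pred ar) ⊆ l.toFinset := by
  unfold atomOfList
  split
  · simp [Free, Finset.image_subset_iff]
  · simp [Free]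

variable [Encodable Pred]

/-- A left inverse of the Gödel numbering. Numbers that code no formula are sent to junk
formulas; an ill-formed atom must become a formula without free variables
(`free_decode_atomCode_subset`). -/
def decode (c : ℕ) : Formula ℕ Pred ar :=
  match h : c.unpair with
  | (0, r) => ((Encodable.decode r.unpair.1).map fun P : Pred =>
      atomOfList P (Denumerable.ofNat (List ℕ) r.unpair.2)).getD (.dep ∅ 0)
  | (1, a) => .neg (decode a)
  | (2, r) => .conj (decode r.unpair.1) (decode r.unpair.2)
  | (3, r) => .dd (vars r.unpair.1) (decode r.unpair.2)
  | (_, r) => .dep (vars r.unpair.1) r.unpair.2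
termination_by c
decreasing_by
  all_goals
    obtain rfl := (Nat.pair_unpair c).symm.trans (congrArg (fun p => Nat.pair p.1 p.2) h)
  · exact lt_pair_right (by omega)
  · exact (Nat.unpair_left_le _).trans_lt (lt_pair_right (by omega))
  · exact (Nat.unpair_right_le _).trans_lt (lt_pair_right (by omega))
  · exact (Nat.unpair_right_le _).trans_lt (lt_pair_right (by omega))

theorem decode_atomCode (p j : ℕ) : (decode (atomCode p j) : Formula ℕ Pred ar) =
    ((Encodable.decode p).map fun P : Pred =>
      atomOfList P (Denumerable.ofNat (List ℕ) j)).getD (.dep ∅ 0) := by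
  rw [decode]
  split <;> grind [code, Nat.unpair_pair]

theorem decode_negCode (a : ℕ) : (decode (negCode a) : Formula ℕ Pred ar) = .neg (decode a) := by
  rw [decode]
  split <;> simp_all

theorem decode_conjCode (a b : ℕ) :
    (decode (conjCode a b) : Formula ℕ Pred ar) = .conj (decode a) (decode b) := by
  rw [decode]
  split <;> grind [code, Nat.unpair_pair]

theorem decode_ddCode (k a : ℕ) :
    (decode (ddCode k a) : Formula ℕ Pred ar) = .dd (vars k) (decode a) := by
  rw [decode]
  split <;> grind [code, Nat.unpair_pair]

theorem decode_depCode (k y : ℕ) :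
    (decode (depCode k y) : Formula ℕ Pred ar) = .dep (vars k) y := by
  rw [decode]
  split <;> grind [code, Nat.unpair_pair]

theorem decode_enc (φ : Formula ℕ Pred ar) : decode (enc φ) = φ := by
  induction φ with
  | atom P x =>
    refine (decode_atomCode _ _).trans ?_
    rw [Encodable.encodek, Denumerable.ofNat_encode]
    exact atomOfList_ofFn P x
  | neg φ ih => exact (decode_negCode _).trans (congrArg _ ih)
  | conj φ ψ ihφ ihψ => exact (decode_conjCode _ _).trans (congrArg₂ _ ihφ ihψ)
  | dd X φ ih => exact (decode_ddCode _ _).trans (congrArg₂ _ (vars_encode_finset X) ih)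
  | dep X y => exact (decode_depCode _ _).trans (congrArg (Formula.dep · y) (vars_encode_finset X))

theorem free_decode_atomCode_subset (p j : ℕ) :
    Free (decode (atomCode p j) : Formula ℕ Pred ar) ⊆ vars j := by
  rw [decode_atomCode]
  cases (Encodable.decode p : Option Pred) with
  | none => simp [Free]
  | some P => exact free_atomOfList_subset P _

end Decode

/-! ### Quasi-models -/

/-- In the type `w`, the variables coded by `k` determine the variable `y`. The bound on `y` is
part of the definition: a type carries no information about variables from `N` on. -/
def Determines (N : ℕ) (w : Set ℕ) (k y : ℕ) : Prop := y < N ∧ depCode k y ∈ w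

/-- In the type `w`, the variables coded by `k` determine all variables coded by `j`. -/
def DeterminesAll (N : ℕ) (w : Set ℕ) (k j : ℕ) : Prop := ∀ y ∈ vars j, Determines N w k y

/-- The types `w` and `v` contain the same formulas whose truth depends only on the values of the
variables coded by `j`. -/
def LocallyEquiv (N j : ℕ) (w v : Set ℕ) : Prop :=
  ∀ z < N, (depCode j z ∈ w ↔ depCode j z ∈ v) ∧ (ddCode j z ∈ w ↔ ddCode j z ∈ v) ∧
    (atomCode z j ∈ w ↔ atomCode z j ∈ v)

/-- The accessibility relation of the modality `𝔻_X` between types, where `k` codes `X`: it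
stands for agreement on all variables determined by `X`. -/
def Similar (N k : ℕ) (w v : Set ℕ) : Prop :=
  ∀ j < N, DeterminesAll N w k j → LocallyEquiv N j w v

/-- The type `w` satisfies the truth conditions of the formulas with components coded below `N`,
where the modalities range over the types in `𝒬`. -/
structure IsCoherent (N : ℕ) (𝒬 : Set (Set ℕ)) (w : Set ℕ) : Prop where
  negCode_mem_iff : ∀ a < N, (negCode a ∈ w ↔ a ∉ w)
  conjCode_mem_iff : ∀ a < N, ∀ b < N, (conjCode a b ∈ w ↔ a ∈ w ∧ b ∈ w)
  ddCode_mem_iff : ∀ k < N, ∀ a < N, (ddCode k a ∈ w ↔ ∀ v ∈ 𝒬, Similar N k w v → a ∈ v)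
  determinesAll_refl : ∀ k < N, DeterminesAll N w k k
  determines_trans : ∀ k < N, ∀ j < N, DeterminesAll N w k j →
    ∀ y < N, Determines N w j y → Determines N w k y

/-- A quasi-model: a set of types (sets of formula codes), each coherent within the set. Taking
all codes below `N` as the relevant ones replaces closure under subformulas. -/
def IsQuasiModel (N : ℕ) (𝒬 : Set (Set ℕ)) : Prop := ∀ w ∈ 𝒬, IsCoherent N 𝒬 w

/-- Some quasi-model refutes the formula with code `n`. -/
def Refutable (n : ℕ) : Prop := ∃ 𝒬, IsQuasiModel (n + 1) 𝒬 ∧ ∃ w ∈ 𝒬, n ∉ w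

theorem LocallyEquiv.equivalence (N j : ℕ) : Equivalence (LocallyEquiv N j) where
  refl _ _ _ := ⟨.rfl, .rfl, .rfl⟩
  symm h z hz := ⟨(h z hz).1.symm, (h z hz).2.1.symm, (h z hz).2.2.symm⟩
  trans h h' z hz := ⟨(h z hz).1.trans (h' z hz).1, (h z hz).2.1.trans (h' z hz).2.1,
    (h z hz).2.2.trans (h' z hz).2.2⟩

/-! ### The quasi-model of a dependence model -/

section TypeOf

variable {Pred O : Type} [Encodable Pred] {ar : Pred → ℕ} {M : DepModel ℕ Pred ar O}
  {N k j : ℕ} {s t : ℕ → O}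

/-- The type of the assignment `s`: the codes of the formulas true at `s`. -/
def typeOf (M : DepModel ℕ Pred ar O) (s : ℕ → O) : Set ℕ := {c | Sat M (decode c) s}

theorem depCode_mem_typeOf {y : ℕ} :
    depCode k y ∈ typeOf M s ↔ ∀ t ∈ M.A, agree (vars k) s t → s y = t y := by
  rw [typeOf, Set.mem_ofPred_eq, decode_depCode, Sat]

theorem ddCode_mem_typeOf {a : ℕ} :
    ddCode k a ∈ typeOf M s ↔ ∀ t ∈ M.A, agree (vars k) s t → a ∈ typeOf M t := by
  simp only [typeOf, Set.mem_ofPred_eq, decode_ddCode, Sat]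

theorem DeterminesAll.agree (h : DeterminesAll N (typeOf M s) k j) (ht : t ∈ M.A)
    (hst : agree (vars k) s t) : agree (vars j) s t :=
  fun y hy => depCode_mem_typeOf.1 (h y hy).2 t ht hst

theorem locallyEquiv_typeOf (hs : s ∈ M.A) (ht : t ∈ M.A) (h : agree (vars j) s t) :
    LocallyEquiv N j (typeOf M s) (typeOf M t) := by
  refine fun z _ => ⟨sat_congr_of_agree_free hs ht ?_, sat_congr_of_agree_free hs ht ?_,
    sat_congr_of_agree_free hs ht (h.mono (free_decode_atomCode_subset z j))⟩
  · rwa [decode_depCode]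
  · rwa [decode_ddCode]

theorem similar_typeOf (hs : s ∈ M.A) (ht : t ∈ M.A) (h : agree (vars k) s t) :
    Similar N k (typeOf M s) (typeOf M t) :=
  fun _ _ hkj => locallyEquiv_typeOf hs ht (hkj.agree ht h)

theorem determinesAll_typeOf_refl (hk : k < N) : DeterminesAll N (typeOf M s) k k :=
  fun y hy => ⟨(lt_of_mem_vars hy).trans hk, depCode_mem_typeOf.2 fun _ _ hst => hst y hy⟩

theorem isQuasiModel_typeOf (M : DepModel ℕ Pred ar O) (N : ℕ) :
    IsQuasiModel N (typeOf M '' M.A) := by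
  rintro _ ⟨s, hs, rfl⟩
  refine ⟨fun a _ => ?_, fun a _ b _ => ?_, fun k hk a ha => ?_,
    fun k hk => determinesAll_typeOf_refl hk, fun k _ j _ hkj y hy hjy => ⟨hy, ?_⟩⟩
  · simp only [typeOf, Set.mem_ofPred_eq, decode_negCode, Sat]
  · simp only [typeOf, Set.mem_ofPred_eq, decode_conjCode, Sat]
  · rw [Set.forall_mem_image]
    constructor
    · intro hdd t ht hsim
      have hloc := hsim k hk (determinesAll_typeOf_refl hk) a ha
      exact ddCode_mem_typeOf.1 (hloc.2.1.1 hdd) t ht fun _ _ => rfl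
    · exact fun h => ddCode_mem_typeOf.2 fun t ht hst => h ht (similar_typeOf hs ht hst)
  · exact depCode_mem_typeOf.2 fun t ht hst =>
      depCode_mem_typeOf.1 hjy.2 t ht (hkj.agree ht hst)

theorem refutable_enc_of_not_sat {φ : Formula ℕ Pred ar} (hs : s ∈ M.A) (hφ : ¬ Sat M φ s) :
    Refutable (enc φ) := by
  refine ⟨_, isQuasiModel_typeOf M _, typeOf M s, ⟨s, hs, rfl⟩, ?_⟩
  rwa [typeOf, Set.mem_ofPred_eq, decode_enc]

end TypeOf

/-! ### Unravelling -/

/-- The dependence structure of a set `T` of types over variables `V`. The elements of `X` name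
sets of variables; `det w k y` says that at `w` the set `k` determines `y`, and `loc k w v` says
that `w` and `v` have the same properties local to `k`. -/
structure DependenceFrame (V X T : Type) where
  vars : X → Set V
  det : T → X → V → Prop
  loc : X → T → T → Prop
  loc_equivalence : ∀ k, Equivalence (loc k)
  det_congr : ∀ {k w v}, loc k w v → ∀ y, det w k y ↔ det v k y
  det_refl : ∀ {w k y}, y ∈ vars k → det w k y
  det_trans : ∀ {w k j z}, (∀ y ∈ vars j, det w k y) → det w j z → det w k z

namespace DependenceFrame

variable {V X T : Type} (F : DependenceFrame V X T) {w₀ w v : T} {k j : X} {y : V}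
  {π ρ : List (X × T)}

/-- At `w`, the set `k` determines every variable of `j`. -/
def DetAll (w : T) (k j : X) : Prop := ∀ y ∈ F.vars j, F.det w k y

/-- `v` agrees with `w` on everything local to a set determined by `k` at `w`. -/
def Sim (k : X) (w v : T) : Prop := ∀ j, F.DetAll w k j → F.loc j w v

/-- The last type of a history. Histories are lists of steps, latest step first. -/
def lastType (w₀ : T) : List (X × T) → T
  | [] => w₀
  | p :: _ => p.2

/-- A history from `w₀`: each step `(k, v)` moves to a type `v` similar over `k` to the current
one, and keeps the values of exactly the variables determined by `k` at `v`. -/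
inductive IsHistory (w₀ : T) : List (X × T) → Prop
  | nil : IsHistory w₀ []
  | cons {k : X} {v : T} {π : List (X × T)} (hπ : IsHistory w₀ π)
      (hsim : F.Sim k (lastType w₀ π) v) : IsHistory w₀ ((k, v) :: π)

open Classical in
/-- The part of a history up to the step that gave `y` its current value. -/
noncomputable def origin (y : V) (π : List (X × T)) : List (X × T) :=
  π.dropWhile fun p => F.det p.2 p.1 y

open Classical in
/-- The part of a history up to the last step that changed the value of a variable of `j`. -/
noncomputable def root (j : X) (π : List (X × T)) : List (X × T) :=
  π.dropWhile fun p => F.DetAll p.2 p.1 j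

theorem sim_refl (k : X) (w : T) : F.Sim k w w := fun j _ => (F.loc_equivalence j).refl w

variable {F}

theorem Sim.detAll_iff (h : F.Sim k w v) : F.DetAll w k j ↔ F.DetAll v k j :=
  forall₂_congr fun y _ => F.det_congr (h k fun _ hy => F.det_refl hy) y

theorem origin_cons_of_det (h : F.det v k y) : F.origin y ((k, v) :: π) = F.origin y π := by
  simp [origin, h]

theorem origin_cons_of_not_det (h : ¬ F.det v k y) :
    F.origin y ((k, v) :: π) = (k, v) :: π := by
  simp [origin, h]

theorem root_cons_of_detAll (h : F.DetAll v k j) : F.root j ((k, v) :: π) = F.root j π := by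
  simp [root, h]

theorem root_cons_of_not_detAll (h : ¬ F.DetAll v k j) :
    F.root j ((k, v) :: π) = (k, v) :: π := by
  simp [root, h]

theorem origin_suffix (y : V) (π : List (X × T)) : F.origin y π <:+ π :=
  List.dropWhile_suffix _

theorem origin_root (hy : y ∈ F.vars j) (π : List (X × T)) :
    F.origin y (F.root j π) = F.origin y π := by
  induction π with
  | nil => rfl
  | cons p π ih =>
    by_cases hj : F.DetAll p.2 p.1 j
    · rw [root_cons_of_detAll hj, origin_cons_of_det (hj y hy), ih]
    · rw [root_cons_of_not_detAll hj]

theorem root_eq_nil_or_exists_origin_eq (j : X) (π : List (X × T)) :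
    F.root j π = [] ∨ ∃ y ∈ F.vars j, F.origin y (F.root j π) = F.root j π := by
  induction π with
  | nil => exact .inl rfl
  | cons p π ih =>
    by_cases hj : F.DetAll p.2 p.1 j
    · rwa [root_cons_of_detAll hj]
    · rw [root_cons_of_not_detAll hj]
      simp only [DetAll, not_forall] at hj
      obtain ⟨y, hy, hdet⟩ := hj
      exact .inr ⟨y, hy, origin_cons_of_not_det hdet⟩

theorem root_suffix_root (h : ∀ y ∈ F.vars j, F.origin y π = F.origin y ρ) :
    F.root j π <:+ F.root j ρ := by
  obtain hnil | ⟨y, hy, hroot⟩ := F.root_eq_nil_or_exists_origin_eq j π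
  · exact hnil ▸ List.nil_suffix
  · rw [← hroot, origin_root hy, h y hy, ← origin_root hy]
    exact origin_suffix y _

theorem root_eq_root (h : ∀ y ∈ F.vars j, F.origin y π = F.origin y ρ) :
    F.root j π = F.root j ρ :=
  (root_suffix_root h).eq_of_length_le (root_suffix_root fun y hy => (h y hy).symm).length_le

theorem IsHistory.loc_root (hπ : F.IsHistory w₀ π) (j : X) :
    F.loc j (lastType w₀ π) (lastType w₀ (F.root j π)) := by
  induction hπ with
  | nil => exact (F.loc_equivalence j).refl _
  | @cons k v π _ hsim ih =>
    by_cases hj : F.DetAll v k j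
    · rw [root_cons_of_detAll hj]
      exact (F.loc_equivalence j).trans
        ((F.loc_equivalence j).symm (hsim j (hsim.detAll_iff.2 hj))) ih
    · rw [root_cons_of_not_detAll hj]
      exact (F.loc_equivalence j).refl _

theorem IsHistory.origin_root_of_det (hπ : F.IsHistory w₀ π) (hy : F.det (lastType w₀ π) j y) :
    F.origin y (F.root j π) = F.origin y π := by
  induction hπ with
  | nil => rfl
  | @cons k v π _ hsim ih =>
    by_cases hj : F.DetAll v k j
    · have hloc := hsim j (hsim.detAll_iff.2 hj)
      rw [root_cons_of_detAll hj, origin_cons_of_det (F.det_trans hj hy),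
        ih ((F.det_congr hloc y).2 hy)]
    · rw [root_cons_of_not_detAll hj]

theorem IsHistory.loc_of_origin_eq (hπ : F.IsHistory w₀ π) (hρ : F.IsHistory w₀ ρ)
    (h : ∀ y ∈ F.vars j, F.origin y π = F.origin y ρ) :
    F.loc j (lastType w₀ π) (lastType w₀ ρ) := by
  have hroot := hπ.loc_root j
  rw [root_eq_root h] at hroot
  exact (F.loc_equivalence j).trans hroot ((F.loc_equivalence j).symm (hρ.loc_root j))

theorem IsHistory.origin_eq_of_det (hπ : F.IsHistory w₀ π) (hρ : F.IsHistory w₀ ρ)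
    (h : ∀ x ∈ F.vars j, F.origin x π = F.origin x ρ) (hy : F.det (lastType w₀ π) j y) :
    F.origin y π = F.origin y ρ := by
  have hy' : F.det (lastType w₀ ρ) j y := (F.det_congr (hπ.loc_of_origin_eq hρ h) y).1 hy
  rw [← hπ.origin_root_of_det hy, root_eq_root h, hρ.origin_root_of_det hy']

theorem IsHistory.sim_of_origin_eq (hπ : F.IsHistory w₀ π) (hρ : F.IsHistory w₀ ρ)
    (h : ∀ y ∈ F.vars k, F.origin y π = F.origin y ρ) :
    F.Sim k (lastType w₀ π) (lastType w₀ ρ) :=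
  fun _ hkj => hπ.loc_of_origin_eq hρ fun y hy => hπ.origin_eq_of_det hρ h (hkj y hy)

variable (F) in
/-- The assignment of a history: the value of `y` is the part of the history at which it arose,
tagged with `y` so that distinct variables have distinct values. -/
noncomputable def assignment (π : List (X × T)) (y : V) : V × List (X × T) := (y, F.origin y π)

theorem agree_assignment_iff {Y : Set V} :
    agree Y (F.assignment π) (F.assignment ρ) ↔ ∀ y ∈ Y, F.origin y π = F.origin y ρ := by
  simp [agree, assignment]

theorem agree_assignment_cons (k : X) (v : T) (π : List (X × T)) :
    agree (F.vars k) (F.assignment π) (F.assignment ((k, v) :: π)) :=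
  agree_assignment_iff.2 fun _ hy => (origin_cons_of_det (F.det_refl hy)).symm

section Unravel

variable {Pred : Type} {ar : Pred → ℕ} {val : (P : Pred) → (Fin (ar P) → V) → T → Prop}

variable (F) in
/-- The dependence model of the histories from `w₀`, where `val` says which atoms a type
contains. -/
def unravel (w₀ : T) (val : (P : Pred) → (Fin (ar P) → V) → T → Prop) :
    DepModel V Pred ar (V × List (X × T)) where
  I P := {o | ∃ π x, F.IsHistory w₀ π ∧ (fun i => F.assignment π (x i)) = o ∧
    val P x (lastType w₀ π)}
  A := F.assignment '' {π | F.IsHistory w₀ π}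

theorem IsHistory.sat_atom_unravel_iff (hπ : F.IsHistory w₀ π) {P : Pred} {x : Fin (ar P) → V}
    (hk : F.vars k ⊆ Set.range x)
    (hval : ∀ w v, F.loc k w v → val P x w → val P x v) :
    Sat (F.unravel w₀ val) (.atom P x) (F.assignment π) ↔ val P x (lastType w₀ π) := by
  refine ⟨?_, fun h => ⟨π, x, hπ, rfl, h⟩⟩
  rintro ⟨ρ, x', hρ, heq, hx'⟩
  obtain rfl : x' = x := funext fun i => congrArg Prod.fst (congrFun heq i)
  refine hval _ _ (hρ.loc_of_origin_eq hπ fun y hy => ?_) hx'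
  obtain ⟨i, rfl⟩ := hk hy
  exact congrArg Prod.snd (congrFun heq i)

theorem IsHistory.sat_dd_unravel_iff (hπ : F.IsHistory w₀ π) {Y : Finset V}
    (hk : F.vars k = Y) {φ : Formula V Pred ar} {p : T → Prop}
    (hφ : ∀ ρ, F.IsHistory w₀ ρ →
      (Sat (F.unravel w₀ val) φ (F.assignment ρ) ↔ p (lastType w₀ ρ))) :
    Sat (F.unravel w₀ val) (.dd Y φ) (F.assignment π) ↔
      ∀ v, F.Sim k (lastType w₀ π) v → p v := by
  constructor
  · intro h v hsim
    have hcons := hπ.cons hsim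
    exact (hφ _ hcons).1 (h _ ⟨_, hcons, rfl⟩ (hk ▸ agree_assignment_cons k v π))
  · rintro h _ ⟨ρ, hρ, rfl⟩ hagree
    rw [← hk, agree_assignment_iff] at hagree
    exact (hφ ρ hρ).2 (h _ (hπ.sim_of_origin_eq hρ hagree))

theorem IsHistory.sat_dep_unravel_iff (hπ : F.IsHistory w₀ π) {Y : Finset V}
    (hk : F.vars k = Y) :
    Sat (F.unravel w₀ val) (.dep Y y) (F.assignment π) ↔ F.det (lastType w₀ π) k y := by
  constructor
  · intro h
    by_contra hdet
    -- Repeating the last type via `k` changes every variable that `k` does not determine.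
    have hcons := hπ.cons (F.sim_refl k (lastType w₀ π))
    have horigin : F.origin y π = (k, lastType w₀ π) :: π :=
      (congrArg Prod.snd (h _ ⟨_, hcons, rfl⟩ (hk ▸ agree_assignment_cons k _ π))).trans
        (origin_cons_of_not_det hdet)
    have hlen := (F.origin_suffix y π).length_le
    rw [horigin, List.length_cons] at hlen
    omega
  · rintro hdet _ ⟨ρ, hρ, rfl⟩ hagree
    rw [← hk, agree_assignment_iff] at hagree
    exact congrArg (Prod.mk y) (hπ.origin_eq_of_det hρ hagree hdet)

end Unravel

end DependenceFrame

/-! ### The dependence model of a quasi-model -/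

section ModelOfQuasiModel

variable {N : ℕ} {𝒬 : Set (Set ℕ)}

open DependenceFrame

/-- The dependence frame of the types of a quasi-model. -/
def IsQuasiModel.frame (h : IsQuasiModel N 𝒬) : DependenceFrame ℕ (Fin N) 𝒬 where
  vars k := vars k
  det w k y := Determines N w k y
  loc k w v := LocallyEquiv N k w v
  loc_equivalence k := (LocallyEquiv.equivalence N k).comap Subtype.val
  det_congr hloc y := and_congr_right fun hy => (hloc y hy).1
  det_refl {w k y} hy := (h w w.2).determinesAll_refl k k.2 y hy
  det_trans {w k j z} hkj hjz := (h w w.2).determines_trans k k.2 j j.2 hkj z hjz.1 hjz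

theorem IsQuasiModel.frame_sim_iff (h : IsQuasiModel N 𝒬) {k : Fin N} {w v : 𝒬} :
    h.frame.Sim k w v ↔ Similar N k w v :=
  Fin.forall_iff

theorem IsQuasiModel.frame_vars_encode (h : IsQuasiModel N 𝒬) {Y : Finset ℕ}
    (hY : Encodable.encode Y < N) : h.frame.vars ⟨_, hY⟩ = Y :=
  congrArg (fun X : Finset ℕ => (X : Set ℕ)) (vars_encode_finset Y)

variable {Pred : Type} [Encodable Pred] {ar : Pred → ℕ}

/-- The dependence model that unravels the quasi-model `𝒬` from the type `w₀`. -/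
def IsQuasiModel.model (Pred : Type) [Encodable Pred] (ar : Pred → ℕ) (h : IsQuasiModel N 𝒬)
    (w₀ : 𝒬) : DepModel ℕ Pred ar (ℕ × List (Fin N × 𝒬)) :=
  h.frame.unravel w₀ fun P x w => enc (Formula.atom (ar := ar) P x) ∈ w.1

theorem IsQuasiModel.sat_model_iff (h : IsQuasiModel N 𝒬) (w₀ : 𝒬) {φ : Formula ℕ Pred ar}
    (hφ : enc φ < N) {π : List (Fin N × 𝒬)} (hπ : h.frame.IsHistory w₀ π) :
    Sat (h.model Pred ar w₀) φ (h.frame.assignment π) ↔ enc φ ∈ (lastType w₀ π).1 := by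
  induction φ generalizing π with
  | atom P x =>
    have hj : Encodable.encode (List.ofFn x) < N := (right_le_code 0 _ _).trans_lt hφ
    have hp : Encodable.encode P < N := (left_le_code 0 _ _).trans_lt hφ
    have hvars : h.frame.vars ⟨_, hj⟩ ⊆ Set.range x := fun y hy => by
      simpa [IsQuasiModel.frame, vars_encode_list] using hy
    exact hπ.sat_atom_unravel_iff hvars fun w v hloc => (hloc _ hp).2.2.1
  | neg φ ih =>
    have hφ' : enc φ < N := (lt_pair_right one_pos).trans hφ
    exact (not_congr (ih hφ' hπ)).trans
      ((h _ (lastType w₀ π).2).negCode_mem_iff _ hφ').symm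
  | conj φ ψ ihφ ihψ =>
    have hφ' : enc φ < N := (left_le_code 2 _ _).trans_lt hφ
    have hψ' : enc ψ < N := (right_le_code 2 _ _).trans_lt hφ
    exact (and_congr (ihφ hφ' hπ) (ihψ hψ' hπ)).trans
      ((h _ (lastType w₀ π).2).conjCode_mem_iff _ hφ' _ hψ').symm
  | dd Y φ ih =>
    have hk : Encodable.encode Y < N := (left_le_code 3 _ _).trans_lt hφ
    have hφ' : enc φ < N := (right_le_code 3 _ _).trans_lt hφ
    have hdd : ddCode (Encodable.encode Y) (enc φ) ∈ (lastType w₀ π).1 ↔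
        ∀ v : 𝒬, h.frame.Sim ⟨_, hk⟩ (lastType w₀ π) v → enc φ ∈ v.1 := by
      simpa only [h.frame_sim_iff, Subtype.forall] using
        (h _ (lastType w₀ π).2).ddCode_mem_iff _ hk _ hφ'
    exact (hπ.sat_dd_unravel_iff (h.frame_vars_encode hk)
      (p := fun v => enc φ ∈ v.1) fun ρ hρ => ih hφ' hρ).trans hdd.symm
  | dep Y y =>
    have hk : Encodable.encode Y < N := (left_le_code 4 _ _).trans_lt hφ
    have hy : y < N := (right_le_code 4 _ _).trans_lt hφ
    exact (hπ.sat_dep_unravel_iff (h.frame_vars_encode hk)).trans (and_iff_right hy)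

theorem exists_not_sat_of_refutable_enc {φ : Formula ℕ Pred ar} (h : Refutable (enc φ)) :
    ∃ (O : Type) (M : DepModel ℕ Pred ar O), ∃ s ∈ M.A, ¬ Sat M φ s := by
  obtain ⟨𝒬, h𝒬, w, hw, hφ⟩ := h
  have hnil : h𝒬.frame.IsHistory ⟨w, hw⟩ [] := .nil
  exact ⟨_, h𝒬.model Pred ar ⟨w, hw⟩, _, ⟨[], hnil, rfl⟩,
    fun hsat => hφ ((h𝒬.sat_model_iff ⟨w, hw⟩ (Nat.lt_succ_self _) hnil).1 hsat)⟩

theorem forall_sat_iff_not_refutable_enc (φ : Formula ℕ Pred ar) :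
    (∀ (O : Type) (M : DepModel ℕ Pred ar O) (s : ℕ → O), s ∈ M.A → Sat M φ s) ↔
      ¬ Refutable (enc φ) := by
  constructor
  · intro hvalid href
    obtain ⟨O, M, s, hs, hφ⟩ := exists_not_sat_of_refutable_enc href
    exact hφ (hvalid O M s hs)
  · exact fun href O M s hs => not_not.1 fun hφ => href (refutable_enc_of_not_sat hs hφ)

end ModelOfQuasiModel

/-! ### Finite quasi-models -/

/-- A strict bound on the codes that occur in the definition of `IsQuasiModel N`. -/
def codeBound (N : ℕ) : ℕ := code 5 N N

theorem code_lt_codeBound {c a b N : ℕ} (hc : c < 5) (ha : a < N) (hb : b < N) :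
    code c a b < codeBound N :=
  calc Nat.pair c (Nat.pair a b) < Nat.pair 5 (Nat.pair a b) := Nat.pair_lt_pair_left _ hc
    _ < Nat.pair 5 (Nat.pair N b) := Nat.pair_lt_pair_right _ (Nat.pair_lt_pair_left _ ha)
    _ < Nat.pair 5 (Nat.pair N N) := Nat.pair_lt_pair_right _ (Nat.pair_lt_pair_right _ hb)

theorem negCode_lt_codeBound {a N : ℕ} (ha : a < N) : negCode a < codeBound N :=
  calc Nat.pair 1 a < Nat.pair 5 a := Nat.pair_lt_pair_left _ (by omega)
    _ < Nat.pair 5 (Nat.pair N N) := Nat.pair_lt_pair_right _ (ha.trans_le (Nat.left_le_pair N N))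

theorem lt_codeBound {a N : ℕ} (ha : a < N) : a < codeBound N :=
  ha.trans_le (left_le_code 5 N N)

/-- The map `f` leaves types unchanged below `K`. It is applied to the truncation of types at
`K = codeBound N`. -/
def PreservesBelow (K : ℕ) (f : Set ℕ → Set ℕ) : Prop := ∀ w, ∀ c < K, (c ∈ f w ↔ c ∈ w)

section Truncation

variable {N k j : ℕ} {f : Set ℕ → Set ℕ}

theorem determines_congr (hf : PreservesBelow (codeBound N) f) (w : Set ℕ) (hk : k < N) (y : ℕ) :
    Determines N (f w) k y ↔ Determines N w k y :=
  and_congr_right fun hy => hf w _ (code_lt_codeBound (by omega) hk hy)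

theorem determinesAll_congr (hf : PreservesBelow (codeBound N) f) (w : Set ℕ) (hk : k < N) :
    DeterminesAll N (f w) k j ↔ DeterminesAll N w k j :=
  forall₂_congr fun y _ => determines_congr hf w hk y

theorem locallyEquiv_congr (hf : PreservesBelow (codeBound N) f) (w v : Set ℕ) (hj : j < N) :
    LocallyEquiv N j (f w) (f v) ↔ LocallyEquiv N j w v := by
  refine forall₂_congr fun z hz => ?_
  simp only [hf _ _ (code_lt_codeBound (show 4 < 5 by omega) hj hz),
    hf _ _ (code_lt_codeBound (show 3 < 5 by omega) hj hz),
    hf _ _ (code_lt_codeBound (show 0 < 5 by omega) hz hj)]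

theorem similar_congr (hf : PreservesBelow (codeBound N) f) (w v : Set ℕ) (hk : k < N) :
    Similar N k (f w) (f v) ↔ Similar N k w v :=
  forall₂_congr fun _ hj => imp_congr (determinesAll_congr hf w hk) (locallyEquiv_congr hf w v hj)

theorem IsQuasiModel.image {𝒬 : Set (Set ℕ)} (h : IsQuasiModel N 𝒬)
    (hf : PreservesBelow (codeBound N) f) : IsQuasiModel N (f '' 𝒬) := by
  rintro _ ⟨w, hw, rfl⟩
  have hcoh := h w hw
  refine ⟨fun a ha => ?_, fun a ha b hb => ?_, fun k hk a ha => ?_, fun k hk => ?_,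
    fun k hk j hj hkj y hy hjy => ?_⟩
  · rw [hf w _ (negCode_lt_codeBound ha), hf w _ (lt_codeBound ha)]
    exact hcoh.negCode_mem_iff a ha
  · rw [hf w _ (code_lt_codeBound (by omega) ha hb), hf w _ (lt_codeBound ha),
      hf w _ (lt_codeBound hb)]
    exact hcoh.conjCode_mem_iff a ha b hb
  · rw [hf w _ (code_lt_codeBound (by omega) hk ha), hcoh.ddCode_mem_iff k hk a ha,
      Set.forall_mem_image]
    exact forall₂_congr fun v _ =>
      imp_congr (similar_congr hf w v hk).symm (hf v _ (lt_codeBound ha)).symm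
  · exact (determinesAll_congr hf w hk).2 (hcoh.determinesAll_refl k hk)
  · rw [determinesAll_congr hf w hk] at hkj
    rw [determines_congr hf w hj] at hjy
    exact (determines_congr hf w hk y).2 (hcoh.determines_trans k hk j hj hkj y hy hjy)

end Truncation

/-- The finite set coded by the binary digits of `n`. -/
def bits (n : ℕ) : Set ℕ := {i | n.testBit i}

theorem lt_of_mem_bits {i n : ℕ} (h : i ∈ bits n) : i < n :=
  Nat.lt_two_pow_self.trans_le (Nat.ge_two_pow_of_testBit h)

theorem exists_bits_eq {K : ℕ} {w : Set ℕ} (hw : w ⊆ Set.Iio K) : ∃ n < 2 ^ K, bits n = w := by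
  classical
  refine ⟨Nat.ofBits fun i : Fin K => decide (i.1 ∈ w), Nat.ofBits_lt_two_pow _, ?_⟩
  ext c
  rcases lt_or_ge c K with hc | hc
  · simp [bits, Nat.testBit_ofBits_lt _ _ hc]
  · have hcw : c ∉ w := fun h => (hw h).not_ge hc
    simp [bits, Nat.testBit_ofBits_ge _ _ hc, hcw]

theorem exists_bits_image_bits_eq {K : ℕ} {𝒬 : Set (Set ℕ)} (h𝒬 : ∀ w ∈ 𝒬, w ⊆ Set.Iio K) :
    ∃ Q < 2 ^ 2 ^ K, bits '' bits Q = 𝒬 := by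
  obtain ⟨Q, hQ, hbits⟩ := exists_bits_eq (K := 2 ^ K) (w := {v | v < 2 ^ K ∧ bits v ∈ 𝒬})
    fun _ hv => hv.1
  refine ⟨Q, hQ, ?_⟩
  ext w
  rw [hbits]
  constructor
  · rintro ⟨v, hv, rfl⟩
    exact hv.2
  · intro hw
    obtain ⟨v, hv, rfl⟩ := exists_bits_eq (h𝒬 w hw)
    exact ⟨v, ⟨hv, hw⟩, rfl⟩

theorem refutable_iff_exists_lt (n : ℕ) :
    Refutable n ↔ ∃ Q < 2 ^ 2 ^ codeBound (n + 1),
      (∀ w < Q, w ∈ bits Q → IsCoherent (n + 1) (bits '' bits Q) (bits w)) ∧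
        ∃ w < Q, w ∈ bits Q ∧ n ∉ bits w := by
  constructor
  · rintro ⟨𝒬, h𝒬, w, hw, hn⟩
    let truncate : Set ℕ → Set ℕ := (· ∩ Set.Iio (codeBound (n + 1)))
    have htruncate : PreservesBelow (codeBound (n + 1)) truncate :=
      fun _ _ hc => and_iff_left hc
    obtain ⟨Q, hQ, himage⟩ := exists_bits_image_bits_eq (𝒬 := truncate '' 𝒬)
      (Set.forall_mem_image.2 fun _ _ => Set.inter_subset_right)
    have hcoh := h𝒬.image htruncate
    rw [← himage] at hcoh
    obtain ⟨v, hv, hvw⟩ := himage.ge ⟨w, hw, rfl⟩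
    refine ⟨Q, hQ, fun u _ hu => hcoh _ ⟨u, hu, rfl⟩, v, lt_of_mem_bits hv, hv, ?_⟩
    rw [hvw]
    exact fun h => hn h.1
  · rintro ⟨Q, -, hcoh, w, -, hw, hn⟩
    exact ⟨bits '' bits Q,
      Set.forall_mem_image.2 fun v hv => hcoh v (lt_of_mem_bits hv) hv, _, ⟨w, hw, rfl⟩, hn⟩

/-! ### Primitive recursiveness -/

section Primrec

variable {α : Type} [Primcodable α]

theorem primrecPred_imp {p q : α → Prop} (hp : PrimrecPred p) (hq : PrimrecPred q) :
    PrimrecPred fun a => p a → q a :=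
  (hp.not.or hq).of_eq fun _ => imp_iff_not_or.symm

theorem primrecPred_iff {p q : α → Prop} (hp : PrimrecPred p) (hq : PrimrecPred q) :
    PrimrecPred fun a => p a ↔ q a :=
  ((primrecPred_imp hp hq).and (primrecPred_imp hq hp)).of_eq fun _ => iff_def.symm

theorem primrecPred_forall_mem_list {l : α → List ℕ} {R : α → ℕ → Prop} (hl : Primrec l)
    (hR : PrimrecPred fun p : α × ℕ => R p.1 p.2) : PrimrecPred fun a => ∀ x ∈ l a, R a x :=
  hR.primrecRel.swap.forall_mem_list.comp hl .id

theorem primrecPred_forall_lt {b : α → ℕ} {R : α → ℕ → Prop} (hb : Primrec b)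
    (hR : PrimrecPred fun p : α × ℕ => R p.1 p.2) : PrimrecPred fun a => ∀ x < b a, R a x :=
  (primrecPred_forall_mem_list (Primrec.list_range.comp hb) hR).of_eq fun a => by
    simp only [List.mem_range]

theorem primrecPred_exists_lt {b : α → ℕ} {R : α → ℕ → Prop} (hb : Primrec b)
    (hR : PrimrecPred fun p : α × ℕ => R p.1 p.2) : PrimrecPred fun a => ∃ x < b a, R a x :=
  (primrecPred_forall_lt (R := fun a x => ¬ R a x) hb hR.not).not.of_eq fun a => by
    simp only [not_forall, not_not, exists_prop]

theorem primrec_two_pow {f : α → ℕ} (hf : Primrec f) : Primrec fun a => 2 ^ f a :=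
  (Primrec₂.unpaired'.1 Nat.Primrec.pow).comp (.const 2) hf

theorem primrec_code (c : ℕ) {f g : α → ℕ} (hf : Primrec f) (hg : Primrec g) :
    Primrec fun a => code c (f a) (g a) :=
  Primrec₂.natPair.comp (.const c) (Primrec₂.natPair.comp hf hg)

theorem primrecPred_mem_bits {f g : α → ℕ} (hf : Primrec f) (hg : Primrec g) :
    PrimrecPred fun a => f a ∈ bits (g a) := by
  have hdigit : PrimrecPred fun a => g a / 2 ^ f a % 2 = 1 :=
    Primrec.eq.comp (Primrec.nat_mod.comp (Primrec.nat_div.comp hg (primrec_two_pow hf))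
      (.const 2)) (.const 1)
  exact hdigit.of_eq fun a => by simp [bits, Nat.testBit_eq_decide_div_mod_eq]

variable {N Q w v k j y : α → ℕ}

theorem primrecPred_determines (hN : Primrec N) (hw : Primrec w) (hk : Primrec k)
    (hy : Primrec y) : PrimrecPred fun a => Determines (N a) (bits (w a)) (k a) (y a) :=
  (Primrec.nat_lt.comp hy hN).and (primrecPred_mem_bits (primrec_code 4 hk hy) hw)

theorem primrecPred_determinesAll (hN : Primrec N) (hw : Primrec w) (hk : Primrec k)
    (hj : Primrec j) : PrimrecPred fun a => DeterminesAll (N a) (bits (w a)) (k a) (j a) :=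
  (primrecPred_forall_mem_list (R := fun a y => Determines (N a) (bits (w a)) (k a) y)
    ((Primrec.ofNat (List ℕ)).comp hj)
    (primrecPred_determines (hN.comp .fst) (hw.comp .fst) (hk.comp .fst) .snd)).of_eq
    fun a => by simp only [DeterminesAll, vars, List.mem_toFinset]

theorem primrecPred_locallyEquiv (hN : Primrec N) (hj : Primrec j) (hw : Primrec w)
    (hv : Primrec v) :
    PrimrecPred fun a => LocallyEquiv (N a) (j a) (bits (w a)) (bits (v a)) := by
  have mem_iff_mem {c : α × ℕ → ℕ} (hc : Primrec c) :
      PrimrecPred fun p => c p ∈ bits (w p.1) ↔ c p ∈ bits (v p.1) :=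
    primrecPred_iff (primrecPred_mem_bits hc (hw.comp .fst))
      (primrecPred_mem_bits hc (hv.comp .fst))
  have hj' : Primrec fun p : α × ℕ => j p.1 := hj.comp .fst
  exact primrecPred_forall_lt hN ((mem_iff_mem (primrec_code 4 hj' .snd)).and
    ((mem_iff_mem (primrec_code 3 hj' .snd)).and (mem_iff_mem (primrec_code 0 .snd hj'))))

theorem primrecPred_similar (hN : Primrec N) (hk : Primrec k) (hw : Primrec w) (hv : Primrec v) :
    PrimrecPred fun a => Similar (N a) (k a) (bits (w a)) (bits (v a)) :=
  primrecPred_forall_lt hN (primrecPred_imp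
    (primrecPred_determinesAll (hN.comp .fst) (hw.comp .fst) (hk.comp .fst) .snd)
    (primrecPred_locallyEquiv (hN.comp .fst) .snd (hw.comp .fst) (hv.comp .fst)))

theorem primrecPred_forall_mem_bits {R : α → ℕ → Prop} (hQ : Primrec Q)
    (hR : PrimrecPred fun p : α × ℕ => R p.1 p.2) :
    PrimrecPred fun a => ∀ x ∈ bits (Q a), R a x :=
  (primrecPred_forall_lt (R := fun a x => x ∈ bits (Q a) → R a x) hQ
    (primrecPred_imp (primrecPred_mem_bits .snd (hQ.comp .fst)) hR)).of_eq
    fun _ => ⟨fun h x hx => h x (lt_of_mem_bits hx) hx, fun h x _ hx => h x hx⟩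

theorem primrecPred_forall_similar {b : α → ℕ} (hN : Primrec N) (hQ : Primrec Q) (hk : Primrec k)
    (hw : Primrec w) (hb : Primrec b) :
    PrimrecPred fun a =>
      ∀ v ∈ bits (Q a), Similar (N a) (k a) (bits (w a)) (bits v) → b a ∈ bits v :=
  primrecPred_forall_mem_bits hQ (primrecPred_imp
    (primrecPred_similar (hN.comp .fst) (hk.comp .fst) (hw.comp .fst) .snd)
    (primrecPred_mem_bits (hb.comp .fst) .snd))

theorem primrecPred_isCoherent (hN : Primrec N) (hQ : Primrec Q) (hw : Primrec w) :
    PrimrecPred fun a => IsCoherent (N a) (bits '' bits (Q a)) (bits (w a)) := by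
  have hN₁ : Primrec fun p : α × ℕ => N p.1 := hN.comp .fst
  have hw₁ : Primrec fun p : α × ℕ => w p.1 := hw.comp .fst
  have hN₂ : Primrec fun p : (α × ℕ) × ℕ => N p.1.1 := hN₁.comp .fst
  have hw₂ : Primrec fun p : (α × ℕ) × ℕ => w p.1.1 := hw₁.comp .fst
  have hQ₂ : Primrec fun p : (α × ℕ) × ℕ => Q p.1.1 := hQ.comp (Primrec.fst.comp .fst)
  have hk₂ : Primrec fun p : (α × ℕ) × ℕ => p.1.2 := Primrec.snd.comp .fst
  have negCode_mem_iff : PrimrecPred fun a => ∀ b < N a,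
      (negCode b ∈ bits (w a) ↔ b ∉ bits (w a)) :=
    primrecPred_forall_lt hN (primrecPred_iff
      (primrecPred_mem_bits (Primrec₂.natPair.comp (.const 1) .snd) hw₁)
      (primrecPred_mem_bits .snd hw₁).not)
  have conjCode_mem_iff : PrimrecPred fun a => ∀ b < N a, ∀ c < N a,
      (conjCode b c ∈ bits (w a) ↔ b ∈ bits (w a) ∧ c ∈ bits (w a)) :=
    primrecPred_forall_lt hN (primrecPred_forall_lt hN₁ (primrecPred_iff
      (primrecPred_mem_bits (primrec_code 2 hk₂ .snd) hw₂)
      ((primrecPred_mem_bits hk₂ hw₂).and (primrecPred_mem_bits .snd hw₂))))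
  have ddCode_mem_iff : PrimrecPred fun a => ∀ k < N a, ∀ b < N a, (ddCode k b ∈ bits (w a) ↔
      ∀ v ∈ bits (Q a), Similar (N a) k (bits (w a)) (bits v) → b ∈ bits v) :=
    primrecPred_forall_lt hN (primrecPred_forall_lt hN₁ (primrecPred_iff
      (primrecPred_mem_bits (primrec_code 3 hk₂ .snd) hw₂)
      (primrecPred_forall_similar hN₂ hQ₂ hk₂ hw₂ .snd)))
  have determinesAll_refl : PrimrecPred fun a => ∀ k < N a,
      DeterminesAll (N a) (bits (w a)) k k :=
    primrecPred_forall_lt hN (primrecPred_determinesAll hN₁ hw₁ .snd .snd)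
  have determines_trans : PrimrecPred fun a => ∀ k < N a, ∀ j < N a,
      DeterminesAll (N a) (bits (w a)) k j → ∀ y < N a,
        Determines (N a) (bits (w a)) j y → Determines (N a) (bits (w a)) k y :=
    primrecPred_forall_lt hN (primrecPred_forall_lt hN₁ (primrecPred_imp
      (primrecPred_determinesAll hN₂ hw₂ hk₂ .snd)
      (primrecPred_forall_lt hN₂ (primrecPred_imp
        (primrecPred_determines (hN₂.comp .fst) (hw₂.comp .fst) (Primrec.snd.comp .fst) .snd)
        (primrecPred_determines (hN₂.comp .fst) (hw₂.comp .fst) (hk₂.comp .fst) .snd)))))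
  refine (negCode_mem_iff.and (conjCode_mem_iff.and (ddCode_mem_iff.and
    (determinesAll_refl.and determines_trans)))).of_eq fun a => ?_
  exact ⟨fun ⟨h₁, h₂, h₃, h₄, h₅⟩ =>
      ⟨h₁, h₂, by simpa only [Set.forall_mem_image] using h₃, h₄, h₅⟩,
    fun ⟨h₁, h₂, h₃, h₄, h₅⟩ =>
      ⟨h₁, h₂, by simpa only [Set.forall_mem_image] using h₃, h₄, h₅⟩⟩

theorem primrecPred_refutable : PrimrecPred Refutable := by
  have hQ : Primrec fun p : ℕ × ℕ => p.2 := .snd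
  have hN : Primrec fun p : (ℕ × ℕ) × ℕ => p.1.1 + 1 := Primrec.succ.comp (Primrec.fst.comp .fst)
  have hmem : PrimrecPred fun p : (ℕ × ℕ) × ℕ => p.2 ∈ bits p.1.2 :=
    primrecPred_mem_bits .snd (hQ.comp .fst)
  have hbound : Primrec fun n => 2 ^ 2 ^ codeBound (n + 1) :=
    primrec_two_pow (primrec_two_pow (primrec_code 5 .succ .succ))
  refine (primrecPred_exists_lt hbound ?_).of_eq fun n => (refutable_iff_exists_lt n).symm
  exact (primrecPred_forall_lt hQ
      (primrecPred_imp hmem (primrecPred_isCoherent hN (hQ.comp .fst) .snd))).and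
    (primrecPred_exists_lt hQ
      (hmem.and (primrecPred_mem_bits (Primrec.fst.comp .fst) .snd).not))

end Primrec

theorem stmt12_general : ∃ f : ℕ → Bool, Primrec f ∧
    ∀ (Pred : Type) [Encodable Pred] (ar : Pred → ℕ) (φ : Formula ℕ Pred ar),
      (f (enc φ) = true ↔
        ∀ (O : Type) (M : DepModel ℕ Pred ar O) (s : ℕ → O), s ∈ M.A → Sat M φ s) := by
  classical
  refine ⟨fun n => decide (¬ Refutable n), primrecPred_refutable.not.decide, fun Pred _ ar φ => ?_⟩
  rw [decide_eq_true_iff, forall_sat_iff_not_refutable_enc]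

/-- Decidability of LFD: over the vocabulary with variables `V = ℕ` and an encodable set
of predicate symbols with computable arity function, validity of LFD formulas on
dependence models is decidable: there is a computable function `f` (on Gödel codes of
formulas) to `Bool` such that `f φ = true` iff `φ` is true at every admissible
assignment of every dependence model. -/
theorem stmt12 (Pred : Type) [Primcodable Pred] (ar : Pred → ℕ) (har : Computable ar) :
    ∃ f : ℕ → Bool, Computable f ∧
      ∀ φ : Formula ℕ Pred ar,
        (f (enc φ) = true ↔
          ∀ (O : Type) (M : DepModel ℕ Pred ar O) (s : ℕ → O), s ∈ M.A → Sat M φ s) := by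
  obtain ⟨f, hf, hvalid⟩ := stmt12_general
  exact ⟨f, hf.to_comp, hvalid Pred ar⟩

end LFD
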